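/- Let 𝒞 be a finite constraint set over base type variables {τ_i}_{i ∈ I}, with Σ finite. Then for each i ∈ I, the language L_i = { w ∈ Σ* : 𝒞 ⊢ VAR τ_i.w } is a prefix-closed regular language over Σ; in particular, there exist sketches S_i (regular trees over Σ) such that w ∈ ℒ(S_i) if and only if 𝒞 ⊢ VAR τ_i.w. -/

import Mathlib

/-- The two-element sign monoid `{⊕, ⊖}` of variances. -/
inductive Sign : Type where
  | pos
  | neg
deriving DecidableEq, Repr

/-- Multiplication in the sign monoid (`⊕` is the identity, `⊖ · ⊖ = ⊕`). -/
def Sign.mul : Sign → Sign → Sign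
  | .pos, s => s
  | .neg, .pos => .neg
  | .neg, .neg => .pos

/-- Variance of a word in `Σ*`: `⟨ε⟩ = ⊕`, `⟨xw⟩ = ⟨x⟩·⟨w⟩`. -/
def wordSign {L : Type} (sgn : L → Sign) : List L → Sign
  | [] => .pos
  | x :: w => (sgn x).mul (wordSign sgn w)

/-- A derived type variable `α.w` with base type variable `α ∈ 𝒱` and word `w ∈ Σ*`. -/
structure DTV (V L : Type) : Type where
  base : V
  word : List L

/-- Appending a single field label to a derived type variable: `α.ℓ`. -/
def DTV.app {V L : Type} (α : DTV V L) (ℓ : L) : DTV V L :=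
  ⟨α.base, α.word ++ [ℓ]⟩

/-- A constraint: either `VAR X` or `X ⊑ Y` for derived type variables. -/
inductive Constraint (V L : Type) : Type where
  | var : DTV V L → Constraint V L
  | sub : DTV V L → DTV V L → Constraint V L

/-- Entailment `𝒞 ⊢ c`: the least relation containing `𝒞` and closed under the
deduction rules T-Left, T-Right, T-InheritL, T-InheritR, T-Prefix, S-Refl,
S-Trans, S-Field⊕, S-Field⊖ and S-Pointer. -/
inductive Entails {V L : Type} (sgn : L → Sign) (load store : L)
    (C : Set (Constraint V L)) : Constraint V L → Prop where
  | ax {c} : c ∈ C → Entails sgn load store C c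
  | tLeft {α β} : Entails sgn load store C (.sub α β) →
      Entails sgn load store C (.var α)
  | tRight {α β} : Entails sgn load store C (.sub α β) →
      Entails sgn load store C (.var β)
  | tInheritL {α β : DTV V L} {ℓ} : Entails sgn load store C (.sub α β) →
      Entails sgn load store C (.var (α.app ℓ)) →
      Entails sgn load store C (.var (β.app ℓ))
  | tInheritR {α β : DTV V L} {ℓ} : Entails sgn load store C (.sub α β) →
      Entails sgn load store C (.var (β.app ℓ)) →
      Entails sgn load store C (.var (α.app ℓ))
  | tPrefix {α : DTV V L} {ℓ} : Entails sgn load store C (.var (α.app ℓ)) →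
      Entails sgn load store C (.var α)
  | sRefl {α} : Entails sgn load store C (.var α) →
      Entails sgn load store C (.sub α α)
  | sTrans {α β γ} : Entails sgn load store C (.sub α β) →
      Entails sgn load store C (.sub β γ) →
      Entails sgn load store C (.sub α γ)
  | sFieldPos {α β : DTV V L} {ℓ} : Entails sgn load store C (.sub α β) →
      Entails sgn load store C (.var (β.app ℓ)) → sgn ℓ = .pos →
      Entails sgn load store C (.sub (α.app ℓ) (β.app ℓ))
  | sFieldNeg {α β : DTV V L} {ℓ} : Entails sgn load store C (.sub α β) →
      Entails sgn load store C (.var (β.app ℓ)) → sgn ℓ = .neg →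
      Entails sgn load store C (.sub (β.app ℓ) (α.app ℓ))
  | sPointer {α : DTV V L} : Entails sgn load store C (.var (α.app load)) →
      Entails sgn load store C (.var (α.app store)) →
      Entails sgn load store C (.sub (α.app store) (α.app load))

/-- `𝒞` is closed under T-Left, T-Right and T-Prefix. -/
def ClosedTLRP {V L : Type} (C : Set (Constraint V L)) : Prop :=
  (∀ α β : DTV V L, Constraint.sub α β ∈ C →
      Constraint.var α ∈ C ∧ Constraint.var β ∈ C) ∧
  (∀ (α : DTV V L) (ℓ : L), Constraint.var (α.app ℓ) ∈ C →
      Constraint.var α ∈ C)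

/-- The language of capabilities `{ v : 𝒞 ⊢ VAR X.v }` of a derived type variable `X`. -/
def capabilityLanguage {V L : Type} (sgn : L → Sign) (load store : L)
    (C : Set (Constraint V L)) (X : DTV V L) : Language L :=
  { v : List L | Entails sgn load store C (.var ⟨X.base, X.word ++ v⟩) }

/-- The derived type variables occurring in a constraint. -/
def Constraint.dtvs {V L : Type} : Constraint V L → Set (DTV V L)
  | .var X => {X}
  | .sub X Y => {X, Y}

/-- The capability languages of the prefixes of derived type variables occurring in `𝒞`. -/
def prefixLanguages {V L : Type} (sgn : L → Sign) (load store : L)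
    (C : Set (Constraint V L)) : Set (Language L) :=
  ⋃ c ∈ C, ⋃ X ∈ c.dtvs, Set.image (fun u => capabilityLanguage sgn load store C ⟨X.base, u⟩)
    { u | u <+: X.word }

section Capability

variable {V L : Type} {sgn : L → Sign} {load store : L} {C : Set (Constraint V L)}

theorem Constraint.finite_dtvs (c : Constraint V L) : c.dtvs.Finite := by
  cases c <;> simp [Constraint.dtvs]

theorem finite_prefixLanguages (hC : C.Finite) :
    (prefixLanguages sgn load store C).Finite := by
  refine hC.biUnion fun c _ => c.finite_dtvs.biUnion fun X _ => Set.Finite.image _ ?_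
  exact (List.finite_toSet X.word.inits).subset fun u hu => (List.mem_inits _ _).2 hu

theorem Entails.var_of_append {τ : V} {u v : List L}
    (h : Entails sgn load store C (.var ⟨τ, u ++ v⟩)) :
    Entails sgn load store C (.var ⟨τ, u⟩) := by
  induction v using List.reverseRecOn with
  | nil => simpa using h
  | append_singleton v ℓ ih =>
    exact ih (Entails.tPrefix (ℓ := ℓ) (by simpa [DTV.app] using h))

theorem mem_capabilityLanguage_app {X : DTV V L} {ℓ : L} {v : List L} :
    v ∈ capabilityLanguage sgn load store C (X.app ℓ) ↔
      ℓ :: v ∈ capabilityLanguage sgn load store C X := by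
  change Entails _ _ _ _ _ ↔ Entails _ _ _ _ _
  simp [DTV.app]

theorem Entails.var_app_of_cons_mem {X : DTV V L} {ℓ : L} {v : List L}
    (h : ℓ :: v ∈ capabilityLanguage sgn load store C X) :
    Entails sgn load store C (.var (X.app ℓ)) :=
  Entails.var_of_append (mem_capabilityLanguage_app.2 h)

/-- Derived type variables related by an entailed subtype constraint have the same
capabilities. -/
theorem Entails.capabilityLanguage_eq {X Y : DTV V L}
    (h : Entails sgn load store C (.sub X Y)) :
    capabilityLanguage sgn load store C X = capabilityLanguage sgn load store C Y := by
  ext v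
  induction v generalizing X Y with
  | nil =>
    change Entails _ _ _ _ _ ↔ Entails _ _ _ _ _
    simpa using iff_of_true h.tLeft h.tRight
  | cons ℓ v ih =>
    have key (hY : Entails sgn load store C (.var (Y.app ℓ))) :
        ℓ :: v ∈ capabilityLanguage sgn load store C X ↔
          ℓ :: v ∈ capabilityLanguage sgn load store C Y := by
      rw [← mem_capabilityLanguage_app, ← mem_capabilityLanguage_app]
      cases hℓ : sgn ℓ with
      | pos => exact ih (h.sFieldPos hY hℓ)
      | neg => exact (ih (h.sFieldNeg hY hℓ)).symm
    exact ⟨fun hX => (key (h.tInheritL (var_app_of_cons_mem hX))).1 hX,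
      fun hY => (key (var_app_of_cons_mem hY)).2 hY⟩

theorem Entails.capabilityLanguage_app_eq {X Y : DTV V L}
    (h : Entails sgn load store C (.sub X Y)) (ℓ : L) :
    capabilityLanguage sgn load store C (X.app ℓ) =
      capabilityLanguage sgn load store C (Y.app ℓ) := by
  ext v
  rw [mem_capabilityLanguage_app, mem_capabilityLanguage_app, h.capabilityLanguage_eq]

theorem forall_prefix_app {P : DTV V L → Prop} {X : DTV V L} {ℓ : L} :
    (∀ u, u <+: (X.app ℓ).word → P ⟨X.base, u⟩) ↔
      (∀ u, u <+: X.word → P ⟨X.base, u⟩) ∧ P (X.app ℓ) := by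
  simp only [DTV.app, List.prefix_concat_iff, or_imp, forall_and, forall_eq]
  exact and_comm

/-- Every prefix of a derived type variable in an entailed constraint has the same
capabilities as some prefix of a derived type variable occurring in `𝒞`. -/
theorem Entails.capabilityLanguage_mem_prefixLanguages {c : Constraint V L}
    (h : Entails sgn load store C c) :
    ∀ X ∈ c.dtvs, ∀ u, u <+: X.word →
      capabilityLanguage sgn load store C ⟨X.base, u⟩ ∈ prefixLanguages sgn load store C := by
  have app_iff (X : DTV V L) (ℓ : L) := forall_prefix_app (X := X) (ℓ := ℓ)
    (P := fun Y => capabilityLanguage sgn load store C Y ∈ prefixLanguages sgn load store C)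
  have base_app (X : DTV V L) (ℓ : L) : (X.app ℓ).base = X.base := rfl
  induction h with
  | ax hc =>
    intro X hX u hu
    exact Set.mem_biUnion hc (Set.mem_biUnion hX ⟨u, hu, rfl⟩)
  | tInheritL h _ ih ih' | tInheritR h _ ih ih' | sFieldPos h _ _ ih ih'
  | sFieldNeg h _ _ ih ih' =>
    have e := h.capabilityLanguage_app_eq
    simp only [Constraint.dtvs, Set.mem_singleton_iff, Set.mem_insert_iff, forall_eq_or_imp,
      forall_eq, base_app, app_iff, e] at ih ih' ⊢
    tauto
  | _ => simp_all [Constraint.dtvs]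

theorem leftQuotient_capabilityLanguage (τ : V) (w : List L) :
    (capabilityLanguage sgn load store C ⟨τ, []⟩).leftQuotient w =
      capabilityLanguage sgn load store C ⟨τ, w⟩ := rfl

theorem isRegular_capabilityLanguage (hC : C.Finite) (τ : V) :
    (capabilityLanguage sgn load store C ⟨τ, []⟩).IsRegular := by
  refine Language.isRegular_iff_finite_range_leftQuotient.2
    (((finite_prefixLanguages (sgn := sgn) (load := load) (store := store) hC).insert 0).subset ?_)
  rintro _ ⟨w, rfl⟩
  rw [leftQuotient_capabilityLanguage]
  by_cases hw : Entails sgn load store C (.var ⟨τ, w⟩)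
  · exact Or.inr (hw.capabilityLanguage_mem_prefixLanguages ⟨τ, w⟩ rfl w (List.prefix_refl w))
  · exact Or.inl (Set.eq_empty_of_forall_notMem fun v hv => hw (Entails.var_of_append hv))

end Capability

/-- for a finite constraint set `𝒞` over a finite alphabet `Σ`,
the language `L_τ = { w : 𝒞 ⊢ VAR τ.w }` of capabilities of each base type
variable `τ` is prefix-closed and regular; in particular it is the language of
a sketch (a regular tree over `Σ`). -/
theorem capabilityLanguage_prefixClosed_isRegular {V L : Type} [Fintype L]
    (sgn : L → Sign) (load store : L)
    (hload : sgn load = .pos) (hstore : sgn store = .neg)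
    (C : Set (Constraint V L)) (hC : C.Finite) (τ : V) :
    (∀ u v : List L,
        (u ++ v) ∈ { w : List L | Entails sgn load store C (.var ⟨τ, w⟩) } →
        u ∈ { w : List L | Entails sgn load store C (.var ⟨τ, w⟩) }) ∧
    Language.IsRegular
      ({ w : List L | Entails sgn load store C (.var ⟨τ, w⟩) } : Language L) := by
  exact ⟨fun _ _ h => Entails.var_of_append h, isRegular_capabilityLanguage hC τ⟩
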